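/- Let (X,d) be a compact metric space, f: X → X a continuous map, and μ ∈ M_f(X). Then for every ε > 0, inf_{F ∋ μ} limsup_{n→∞} (1/n) ln N(F;n,ε) ≤ inf_{ξ: diam ξ < ε} h_μ(f,ξ), where the outer infimum on the left is over all neighborhoods F of μ in the weak* topology on Borel probability measures, and the infimum on the right is over all finite measurable partitions ξ of X with diam ξ < ε. -/

import Mathlib

open MeasureTheory Filter Set Topology
open scoped ENNReal NNReal

noncomputable section

namespace MMD

variable {X : Type*}

/-! ### Bowen balls, Bowen topological entropy and metric mean dimension -/

/-- The Bowen ball `B_n(x,ε) = {y | d_n(x,y) < ε}` where `d_n` is the Bowen metric. -/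
def bowenBall [PseudoMetricSpace X] (f : X → X) (x : X) (n : ℕ) (ε : ℝ) : Set X :=
  {y | ∀ i < n, dist (f^[i] x) (f^[i] y) < ε}

/-- The weight sum `Σ_{(x,n) ∈ C} exp (-s n)` of a (countable) collection of Bowen balls,
encoded by its set of centers/lengths. -/
def coverSum (s : ℝ) (C : Set (X × ℕ)) : ℝ≥0∞ :=
  ∑' p : C, ENNReal.ofReal (Real.exp (-s * ((p : X × ℕ).2 : ℝ)))

/-- `m(Z,s,N,ε,f)`: infimum over countable (or finite) covers of `Z` by Bowen balls
`B_{n_i}(x_i,ε)` with `n_i ≥ N` of `Σ exp (-s n_i)`. -/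
def mB [PseudoMetricSpace X] (f : X → X) (Z : Set X) (s : ℝ) (N : ℕ) (ε : ℝ) : ℝ≥0∞ :=
  ⨅ (C : Set (X × ℕ)) (_ : C.Countable) (_ : ∀ p ∈ C, N ≤ p.2)
    (_ : Z ⊆ ⋃ p ∈ C, bowenBall f p.1 p.2 ε), coverSum s C

/-- `m(Z,s,ε) = lim_{N→∞} m(Z,s,N,ε,f)`; the limit of this monotone quantity is the sup. -/
def mBLim [PseudoMetricSpace X] (f : X → X) (Z : Set X) (s : ℝ) (ε : ℝ) : ℝ≥0∞ :=
  ⨆ N : ℕ, mB f Z s N ε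

/-- The Bowen topological entropy of `Z` at scale `ε`:
`h_top^B(Z,f,ε) = inf {s | m(Z,s,ε) = 0}`. -/
def hB [PseudoMetricSpace X] (f : X → X) (Z : Set X) (ε : ℝ) : ℝ :=
  sInf {s : ℝ | mBLim f Z s ε = 0}

/-- Upper Bowen metric mean dimension of `Z`. -/
def mdimUpper [PseudoMetricSpace X] (f : X → X) (Z : Set X) : ℝ :=
  limsup (fun ε : ℝ => hB f Z ε / |Real.log ε|) (𝓝[>] (0:ℝ))

/-- Lower Bowen metric mean dimension of `Z`. -/
def mdimLower [PseudoMetricSpace X] (f : X → X) (Z : Set X) : ℝ :=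
  liminf (fun ε : ℝ => hB f Z ε / |Real.log ε|) (𝓝[>] (0:ℝ))

/-! ### Finite measurable partitions and measure-theoretic entropy -/

/-- `P` is a finite measurable partition of `X` (mod `μ`): its elements are measurable,
they cover `X` up to a `μ`-null set, and they pairwise intersect in `μ`-null sets. -/
def IsPartition [MeasurableSpace X] (μ : Measure X) (P : Finset (Set X)) : Prop :=
  (∀ A ∈ P, MeasurableSet A) ∧ μ (Set.univ \ ⋃ A ∈ P, A) = 0 ∧
    ∀ A ∈ P, ∀ B ∈ P, A ≠ B → μ (A ∩ B) = 0

/-- Static entropy `H_μ(P) = -Σ_{A∈P} μ(A) log μ(A)`. -/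
def partEnt [MeasurableSpace X] (μ : Measure X) (P : Finset (Set X)) : ℝ :=
  ∑ A ∈ P, Real.negMulLog ((μ A).toReal)

/-- Join (common refinement) of two finite families of sets. -/
def joinParts (P Q : Finset (Set X)) : Finset (Set X) :=
  letI := Classical.decEq (Set X)
  (P ×ˢ Q).image fun p => p.1 ∩ p.2

/-- `dynJoin f P n = ⋁_{j=0}^{n-1} f^{-j} P`. -/
def dynJoin (f : X → X) (P : Finset (Set X)) : ℕ → Finset (Set X)
  | 0 => {Set.univ}
  | n + 1 =>
      letI := Classical.decEq (Set X)
      joinParts P ((dynJoin f P n).image fun A => f ⁻¹' A)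

/-- Measure-theoretic entropy of `f` w.r.t. the partition `P`:
`h_μ(f,P) = lim_n (1/n) H_μ(⋁_{j<n} f^{-j}P)` (the limit exists, hence equals the `limsup`). -/
def dynEnt [MeasurableSpace X] (μ : Measure X) (f : X → X) (P : Finset (Set X)) : ℝ :=
  limsup (fun n : ℕ => partEnt μ (dynJoin f P n) / n) atTop

/-- `diam P < ε`, i.e. every element of `P` has diameter `< ε`. -/
def partDiamLt [PseudoMetricSpace X] (P : Finset (Set X)) (ε : ℝ) : Prop :=
  ∀ A ∈ P, Metric.diam A < ε

/-- `inf_{ξ : diam ξ < ε} h_μ(f,ξ)`, the infimum over all finite measurable partitions of `X`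
with diameter `< ε`. -/
def infEnt [PseudoMetricSpace X] [MeasurableSpace X] (μ : Measure X) (f : X → X) (ε : ℝ) : ℝ :=
  sInf (dynEnt μ f '' {P : Finset (Set X) | IsPartition μ P ∧ partDiamLt P ε})

/-! ### Empirical measures, generic points and saturated sets -/

/-- The `n`-th empirical measure `E_n(x) = (1/n) Σ_{j<n} δ_{f^j x}` (defined as `E_1(x)`
for `n = 0`, a junk value). -/
def empMeasure [MeasurableSpace X] (f : X → X) (x : X) (n : ℕ) : Measure X :=
  ((max n 1 : ℕ) : ℝ≥0∞)⁻¹ • ∑ j ∈ Finset.range (max n 1), Measure.dirac (f^[j] x)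

instance [MeasurableSpace X] (f : X → X) (x : X) (n : ℕ) :
    IsProbabilityMeasure (empMeasure f x n) := by
  constructor
  have h1 : (0:ℕ) < max n 1 := lt_of_lt_of_le one_pos (le_max_right n 1)
  have hsum : (∑ j ∈ Finset.range (max n 1), Measure.dirac (f^[j] x)) Set.univ
      = ((max n 1 : ℕ) : ℝ≥0∞) := by
    rw [Measure.finset_sum_apply]
    simp
  simp only [empMeasure, Measure.smul_apply, smul_eq_mul, hsum]
  exact ENNReal.inv_mul_cancel (by exact_mod_cast h1.ne') (by simp)

/-- The `n`-th empirical measure as a probability measure. -/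
def empProb [MeasurableSpace X] (f : X → X) (x : X) (n : ℕ) : ProbabilityMeasure X :=
  ⟨empMeasure f x n, inferInstance⟩

/-- `V_f(x)`: the set of weak* limit points of the sequence of empirical measures of `x`. -/
def Vf [MetricSpace X] [MeasurableSpace X] [BorelSpace X] (f : X → X) (x : X) :
    Set (ProbabilityMeasure X) :=
  {ν | MapClusterPt ν atTop (empProb f x)}

/-- The saturated set `G_K = {x | V_f(x) = K}`. -/
def GK [MetricSpace X] [MeasurableSpace X] [BorelSpace X] (f : X → X)
    (K : Set (ProbabilityMeasure X)) : Set X :=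
  {x | Vf f x = K}

/-- The generic set `G_μ = {x | V_f(x) = {μ}}`. -/
def genSet [MetricSpace X] [MeasurableSpace X] [BorelSpace X] (f : X → X)
    (μ : ProbabilityMeasure X) : Set X :=
  GK f {μ}

/-! ### Invariant measures, supports, measure center, omega-limit sets -/

/-- `μ` is an `f`-invariant (Borel probability) measure. -/
def InvariantProb [MeasurableSpace X] (f : X → X) (μ : ProbabilityMeasure X) : Prop :=
  Measure.map f (μ : Measure X) = (μ : Measure X)

/-- The set `M_f(X)` of invariant probability measures. -/
def invSet [MeasurableSpace X] (f : X → X) : Set (ProbabilityMeasure X) :=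
  {μ | InvariantProb f μ}

/-- The support of a measure: points all of whose neighborhoods have positive measure. -/
def measSupport [TopologicalSpace X] [MeasurableSpace X] (μ : Measure X) : Set X :=
  {x | ∀ U ∈ 𝓝 x, 0 < μ U}

/-- The measure center `C_f(X) = closure (⋃_{μ ∈ M_f(X)} S_μ)`. -/
def measCenter [TopologicalSpace X] [MeasurableSpace X] (f : X → X) : Set X :=
  closure (⋃ μ ∈ invSet f, measSupport (μ : Measure X))

/-- The omega-limit set `ω_f(x) = ⋂_n closure {f^k x : k ≥ n}`. -/
def omegaSet [TopologicalSpace X] (f : X → X) (x : X) : Set X :=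
  ⋂ n : ℕ, closure {y | ∃ k, n ≤ k ∧ f^[k] x = y}

/-- The set of points whose omega-limit set contains the measure center. -/
def CtrSet [TopologicalSpace X] [MeasurableSpace X] (f : X → X) : Set X :=
  {x | measCenter f ⊆ omegaSet f x}

/-! ### Blow-up functions and the g-almost product property -/

/-- A blowup function: nondecreasing, unbounded, `g n < n` and `g n / n → 0`. -/
structure IsBlowup (g : ℕ → ℕ) : Prop where
  mono : Monotone g
  unbounded : ∀ C : ℕ, ∃ n, C < g n
  lt_self : ∀ n, 0 < n → g n < n
  ratio_tendsto_zero : Tendsto (fun n : ℕ => (g n : ℝ) / n) atTop (𝓝 0)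

/-- The g-blowup `B_n(g;x,ε)` of the Bowen ball `B_n(x,ε)`. -/
def blowupBall [PseudoMetricSpace X] (f : X → X) (g : ℕ → ℕ) (x : X) (n : ℕ) (ε : ℝ) :
    Set X :=
  {y | ∃ Λ : Finset ℕ, Λ ⊆ Finset.range n ∧
    letI := Classical.decEq ℕ
    (Finset.range n \ Λ).card ≤ g n ∧ ∀ j ∈ Λ, dist (f^[j] x) (f^[j] y) ≤ ε}

/-- The g-almost product property. -/
def GAlmostProduct [PseudoMetricSpace X] (f : X → X) (g : ℕ → ℕ) : Prop :=
  ∃ m : ℝ → ℕ, (∀ s t : ℝ, 0 < s → s ≤ t → m t ≤ m s) ∧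
    ∀ (k : ℕ) (x : ℕ → X) (ε : ℕ → ℝ) (n : ℕ → ℕ),
      (∀ j < k, 0 < ε j) → (∀ j < k, m (ε j) ≤ n j) →
      (⋂ j ∈ Finset.range k,
        (f^[∑ i ∈ Finset.range j, n i] ⁻¹' blowupBall f g (x j) (n j) (ε j))).Nonempty

/-! ### Separated sets and Pfister–Sullivan quantities -/

/-- The number of times `0 ≤ j < n` at which the orbits of `x` and `y` are `ε`-apart. -/
def sepCount [PseudoMetricSpace X] (f : X → X) (x y : X) (n : ℕ) (ε : ℝ) : ℕ :=
  letI := Classical.decPred fun j : ℕ => ε < dist (f^[j] x) (f^[j] y)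
  ((Finset.range n).filter fun j => ε < dist (f^[j] x) (f^[j] y)).card

/-- `N(F; δ, n, ε)`: maximal cardinality of a `(δ,n,ε)`-separated subset of
`X_{n,F} = {x | E_n(x) ∈ F}`. -/
def NsepD [MetricSpace X] [MeasurableSpace X] [BorelSpace X] (f : X → X)
    (F : Set (ProbabilityMeasure X)) (δ : ℝ) (n : ℕ) (ε : ℝ) : ℕ :=
  sSup {c : ℕ | ∃ E : Finset X, (↑E : Set X) ⊆ {x | empProb f x n ∈ F} ∧
    (∀ x ∈ E, ∀ y ∈ E, x ≠ y → δ * n ≤ (sepCount f x y n ε : ℝ)) ∧ E.card = c}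

/-- `N(F; n, ε)`: maximal cardinality of an `(n,ε)`-separated subset of `X_{n,F}`. -/
def NsepP [MetricSpace X] [MeasurableSpace X] [BorelSpace X] (f : X → X)
    (F : Set (ProbabilityMeasure X)) (n : ℕ) (ε : ℝ) : ℕ :=
  sSup {c : ℕ | ∃ E : Finset X, (↑E : Set X) ⊆ {x | empProb f x n ∈ F} ∧
    (∀ x ∈ E, ∀ y ∈ E, x ≠ y → ∃ i < n, ε < dist (f^[i] x) (f^[i] y)) ∧ E.card = c}

/-- `PS-bar(μ,δ,ε) = inf_{F ∋ μ} limsup_n (1/n) ln N(F;δ,n,ε)`. -/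
def PSbar [MetricSpace X] [MeasurableSpace X] [BorelSpace X] (f : X → X)
    (μ : ProbabilityMeasure X) (δ ε : ℝ) : ℝ :=
  sInf ((fun F => limsup (fun n : ℕ => Real.log (NsepD f F δ n ε) / n) atTop) ''
    {F : Set (ProbabilityMeasure X) | F ∈ 𝓝 μ})

/-! ### Convex combinations of probability measures -/

/-- The convex hull `cov{μ_1,…,μ_m}` of finitely many probability measures. -/
def convexCombos [MeasurableSpace X] {m : ℕ} (μ : Fin m → ProbabilityMeasure X) :
    Set (ProbabilityMeasure X) :=
  {ν | ∃ t : Fin m → ℝ≥0∞, (∑ i, t i) = 1 ∧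
    (ν : Measure X) = ∑ i, t i • (μ i : Measure X)}

/-- The convex combination `θ μ + (1-θ) ν` of two probability measures (with `θ`
clamped into `[0,1]`). -/
def mixP [MeasurableSpace X] (μ ν : ProbabilityMeasure X) (θ : ℝ) : ProbabilityMeasure X :=
  ⟨ENNReal.ofReal (min (max θ 0) 1) • (μ : Measure X)
      + ENNReal.ofReal (1 - min (max θ 0) 1) • (ν : Measure X), by
    constructor
    set t := min (max θ 0) 1 with ht
    have h0 : 0 ≤ t := le_min (le_max_right θ 0) zero_le_one
    have h1 : t ≤ 1 := min_le_right _ _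
    rw [Measure.add_apply, Measure.smul_apply, Measure.smul_apply, measure_univ, measure_univ,
      smul_eq_mul, smul_eq_mul, mul_one, mul_one, ← ENNReal.ofReal_add h0 (by linarith)]
    have : t + (1 - t) = 1 := by ring
    rw [this, ENNReal.ofReal_one]⟩

/-- Condition A.3: for invariant `μ, ν` with `α μ ≠ α ν`, the map
`θ ↦ α(θμ + (1-θ)ν)` is not constant on any nondegenerate subinterval of `[0,1]`. -/
def CondA3 [MeasurableSpace X] (f : X → X) (α : ProbabilityMeasure X → ℝ) : Prop :=
  ∀ μ ∈ invSet f, ∀ ν ∈ invSet f, α μ ≠ α ν →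
    ∀ a b : ℝ, 0 ≤ a → a < b → b ≤ 1 →
      ¬ (∀ s ∈ Set.Icc a b, ∀ t ∈ Set.Icc a b, α (mixP μ ν s) = α (mixP μ ν t))

end MMD

end

open MMD MeasureTheory Filter Set Topology
open scoped ENNReal NNReal

noncomputable section

/-!
Fix a partition `P` of diameter less than `ε` and a block length `q`. Shrink the atoms of `P` to
disjoint closed cores of almost full measure and thicken these to disjoint open sets, still of
diameter at most `ε`; the few remaining points are coded by finitely many extra letters of diameter
at most `ε`. Points of an `(n, ε)`-separated set then have distinct itineraries of length `n`.

Give the words of length `q` positive weights summing to at most `1` that nearly dominate the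
measures of the atoms of `⋁_{j<q} f^{-j} P`. Since the code is locally constant near the cores,
minus the logarithm of the weight of the word read at `x` has a continuous majorant `ψ` with
`∫ ψ ∂μ < H_μ(⋁_{j<q} f^{-j} P) + δ`. If the empirical measure of `x` lies in the neighbourhood
`{ν | ∫ ψ ∂ν < H_μ(⋁_{j<q} f^{-j} P) + δ}` of `μ`, then for one of the `q` ways to cut the itinerary
of `x` into blocks of length `q`, the product of the block weights is at least
`exp (-n (H_μ(⋁_{j<q} f^{-j} P) + δ) / q)`, and there are few such itineraries because the weights
sum to at most `1`.
-/

namespace MMD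

section Counting

variable {X A : Type*}

theorem sum_range_mul_eq_sum_sum {M : Type*} [AddCommMonoid M] (g : ℕ → M) (q N : ℕ) :
    ∑ i ∈ Finset.range (N * q), g i
      = ∑ r ∈ Finset.range q, ∑ j ∈ Finset.range N, g (j * q + r) := by
  induction N with
  | zero => simp
  | succ N ih =>
    simp only [Nat.succ_mul, Finset.sum_range_add, ih, Finset.sum_range_succ,
      Finset.sum_add_distrib]

theorem exists_phase_sum_le {g : ℕ → ℝ} (hg : ∀ i, 0 ≤ g i) {q n : ℕ} (hq : 0 < q) {L : ℝ}
    (hL : ∑ i ∈ Finset.range n, g i ≤ q * L) :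
    ∃ r < q, ∑ j ∈ Finset.range (n / q), g (j * q + r) ≤ L := by
  have hsum : ∑ r ∈ Finset.range q, ∑ j ∈ Finset.range (n / q), g (j * q + r)
      ≤ ∑ _r ∈ Finset.range q, L :=
    calc ∑ r ∈ Finset.range q, ∑ j ∈ Finset.range (n / q), g (j * q + r)
        = ∑ i ∈ Finset.range (n / q * q), g i := (sum_range_mul_eq_sum_sum g q _).symm
      _ ≤ ∑ i ∈ Finset.range n, g i :=
        Finset.sum_le_sum_of_subset_of_nonneg (Finset.range_mono (Nat.div_mul_le_self n q))
          fun i _ _ => hg i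
      _ ≤ ∑ _r ∈ Finset.range q, L := by simpa using hL
  simpa using Finset.exists_le_of_sum_le (Finset.nonempty_range_iff.2 hq.ne') hsum

/-- The itinerary of length `q` of the point `x` through the fibres of a coding map `c : X → A`,
as a word in the alphabet `A`. -/
def itinerary (f : X → X) (c : X → A) (q : ℕ) (x : X) : Fin q → A :=
  fun j => c (f^[j] x)

theorem itinerary_eq_of_blocks {f : X → X} {c : X → A} {q n r : ℕ} (hr : r < q) {x y : X}
    (hhead : itinerary f c q x = itinerary f c q y)
    (hblocks : ∀ j < n / q,
      itinerary f c q (f^[j * q + r] x) = itinerary f c q (f^[j * q + r] y))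
    (htail : itinerary f c q (f^[n / q * q] x) = itinerary f c q (f^[n / q * q] y)) :
    itinerary f c n x = itinerary f c n y := by
  have hq : 0 < q := by omega
  have read_off : ∀ s, itinerary f c q (f^[s] x) = itinerary f c q (f^[s] y) →
      ∀ i, s ≤ i → i < s + q → c (f^[i] x) = c (f^[i] y) := by
    intro s hs i hsi his
    have := congrFun hs ⟨i - s, by omega⟩
    simpa only [itinerary, ← Function.iterate_add_apply, Nat.sub_add_cancel hsi] using this
  funext ⟨i, hi⟩
  change c (f^[i] x) = c (f^[i] y)
  rcases lt_or_ge i r with hir | hir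
  · exact read_off 0 hhead i i.zero_le (by omega)
  have hdiv := Nat.div_add_mod' (i - r) q
  have hmod := Nat.mod_lt (i - r) hq
  rcases lt_or_ge ((i - r) / q) (n / q) with hlt | hge
  · exact read_off _ (hblocks _ hlt) i (by omega) (by omega)
  · have hle : n / q * q ≤ (i - r) / q * q := Nat.mul_le_mul_right q hge
    exact read_off _ htail i (by omega) (hi.trans (Nat.lt_div_mul_add hq))

/-- Kraft's inequality read backwards: the weights `∏ j, p (w j)` of all words `w` sum to at
most `1`, so at most `exp L` words have weight `exp (-L)` or more. -/
theorem card_le_card_mul_exp_of_injOn {B Γ : Type*} [Fintype B] [Fintype Γ] {N : ℕ} {p : B → ℝ}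
    (hp : ∀ b, 0 < p b) (hsum : ∑ b, p b ≤ 1) {E : Finset X} {code : X → Γ × (Fin N → B)}
    (hcode : InjOn code E) {L : ℝ}
    (hL : ∀ x ∈ E, ∑ j, -Real.log (p ((code x).2 j)) ≤ L) :
    (E.card : ℝ) ≤ Fintype.card Γ * Real.exp L := by
  classical
  let weight : Γ × (Fin N → B) → ℝ := fun w => Real.exp L * ∏ j, p (w.2 j)
  have weight_nonneg : ∀ w, 0 ≤ weight w := fun w =>
    mul_nonneg (Real.exp_pos _).le (Finset.prod_nonneg fun j _ => (hp _).le)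
  have one_le_weight : ∀ x ∈ E, 1 ≤ weight (code x) := by
    intro x hx
    have hprod : ∏ j, p ((code x).2 j) = Real.exp (-∑ j, -Real.log (p ((code x).2 j))) := by
      simp only [Finset.sum_neg_distrib, neg_neg, Real.exp_sum, Real.exp_log (hp _)]
    simp only [weight, hprod, ← Real.exp_add]
    exact Real.one_le_exp (by linarith [hL x hx])
  calc (E.card : ℝ) = ∑ _x ∈ E, (1 : ℝ) := by simp
    _ ≤ ∑ x ∈ E, weight (code x) := Finset.sum_le_sum one_le_weight
    _ = ∑ w ∈ E.image code, weight w := (Finset.sum_image hcode).symm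
    _ ≤ ∑ w, weight w := Finset.sum_le_sum_of_subset_of_nonneg (Finset.subset_univ _)
        fun w _ _ => weight_nonneg w
    _ = Fintype.card Γ * (Real.exp L * (∑ b, p b) ^ N) := by
        simp only [weight, Fintype.sum_prod_type, Fintype.sum_pow, Finset.mul_sum,
          Finset.sum_const, Finset.card_univ, nsmul_eq_mul]
    _ ≤ Fintype.card Γ * (Real.exp L * 1) := by
        gcongr
        exact pow_le_one₀ (Finset.sum_nonneg fun b _ => (hp b).le) hsum
    _ = Fintype.card Γ * Real.exp L := by rw [mul_one]

variable [Fintype A] {f : X → X} {c : X → A} {q n : ℕ} {p : (Fin q → A) → ℝ} {L : ℝ}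
  {E : Finset X}

theorem card_le_of_phase_sum_le (hp : ∀ w, 0 < p w) (hsum : ∑ w, p w ≤ 1)
    (hE : InjOn (itinerary f c n) E) {r : ℕ} (hr : r < q)
    (hL : ∀ x ∈ E, ∑ j ∈ Finset.range (n / q),
      -Real.log (p (itinerary f c q (f^[j * q + r] x))) ≤ L) :
    (E.card : ℝ) ≤ (Fintype.card (Fin q → A) : ℝ) ^ 2 * Real.exp L := by
  let code : X → ((Fin q → A) × (Fin q → A)) × (Fin (n / q) → Fin q → A) := fun x =>
    ((itinerary f c q x, itinerary f c q (f^[n / q * q] x)),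
      fun j => itinerary f c q (f^[j * q + r] x))
  have hcode : InjOn code E := by
    intro x hx y hy hxy
    simp only [code, Prod.mk.injEq] at hxy
    obtain ⟨⟨hhead, htail⟩, hblocks⟩ := hxy
    exact hE hx hy
      (itinerary_eq_of_blocks hr hhead (fun j hj => congrFun hblocks ⟨j, hj⟩) htail)
  have := card_le_card_mul_exp_of_injOn hp hsum hcode (L := L) fun x hx => by
    simpa only [Finset.sum_range] using hL x hx
  simpa only [Fintype.card_prod, Nat.cast_mul, Nat.cast_pow, ← sq] using this

theorem card_le_of_orbit_sum_le (hq : 0 < q) (hp : ∀ w, 0 < p w) (hsum : ∑ w, p w ≤ 1)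
    (hE : InjOn (itinerary f c n) E)
    (hL : ∀ x ∈ E, ∑ i ∈ Finset.range n, -Real.log (p (itinerary f c q (f^[i] x))) ≤ q * L) :
    (E.card : ℝ) ≤ q * (Fintype.card (Fin q → A) : ℝ) ^ 2 * Real.exp L := by
  classical
  let phaseSum : ℕ → X → ℝ := fun r x =>
    ∑ j ∈ Finset.range (n / q), -Real.log (p (itinerary f c q (f^[j * q + r] x)))
  have neg_log_nonneg : ∀ w, 0 ≤ -Real.log (p w) := fun w =>
    neg_nonneg.2 <| Real.log_nonpos (hp w).le <|
      (Finset.single_le_sum (fun v _ => (hp v).le) (Finset.mem_univ w)).trans hsum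
  have hcover : E ⊆ (Finset.range q).biUnion fun r => E.filter (phaseSum r · ≤ L) := by
    intro x hx
    obtain ⟨r, hr, hrL⟩ := exists_phase_sum_le (fun i => neg_log_nonneg _) hq (hL x hx)
    exact Finset.mem_biUnion.2 ⟨r, Finset.mem_range.2 hr, Finset.mem_filter.2 ⟨hx, hrL⟩⟩
  calc (E.card : ℝ)
      ≤ ∑ r ∈ Finset.range q, ((E.filter (phaseSum r · ≤ L)).card : ℝ) := by
        exact_mod_cast (Finset.card_le_card hcover).trans Finset.card_biUnion_le
    _ ≤ ∑ _r ∈ Finset.range q, (Fintype.card (Fin q → A) : ℝ) ^ 2 * Real.exp L := by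
        refine Finset.sum_le_sum fun r hr => ?_
        exact card_le_of_phase_sum_le hp hsum (hE.mono (Finset.filter_subset _ E))
          (Finset.mem_range.1 hr) fun x hx => (Finset.mem_filter.1 hx).2
    _ = q * (Fintype.card (Fin q → A) : ℝ) ^ 2 * Real.exp L := by
        rw [Finset.sum_const, Finset.card_range, nsmul_eq_mul, mul_assoc]

end Counting

section Entropy

theorem exists_pos_weights_of_map {β W : Type*} [Fintype β] [Fintype W] {m : β → ℝ}
    (hm : ∀ b, 0 ≤ m b) (hsum : ∑ b, m b = 1) (e : β → W) {δ : ℝ} (hδ : 0 < δ) :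
    ∃ p : W → ℝ, (∀ w, 0 < p w) ∧ ∑ w, p w ≤ 1 ∧ ∀ b, m b ≤ (1 + δ) * p (e b) := by
  classical
  let pushforward : W → ℝ := fun w => ∑ b with e b = w, m b
  have pushforward_nonneg : ∀ w, 0 ≤ pushforward w := fun w => Finset.sum_nonneg fun b _ => hm b
  have : Nonempty W := by
    by_contra hW
    have : IsEmpty β := ⟨fun b => hW ⟨e b⟩⟩
    simp at hsum
  refine ⟨fun w => (pushforward w + δ / Fintype.card W) / (1 + δ), fun w => ?_, ?_, fun b => ?_⟩
  · have := pushforward_nonneg w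
    positivity
  · have hpush : ∑ w, pushforward w = 1 := by rw [← hsum]; exact Finset.sum_fiberwise _ e m
    have hcard : (Fintype.card W : ℝ) ≠ 0 := by positivity
    rw [← Finset.sum_div, Finset.sum_add_distrib, hpush, Finset.sum_const, Finset.card_univ,
      nsmul_eq_mul, mul_div_cancel₀ _ hcard, div_self (by positivity)]
  · have hle : m b ≤ pushforward (e b) :=
      Finset.single_le_sum (fun b _ => hm b) (Finset.mem_filter.2 ⟨Finset.mem_univ b, rfl⟩)
    rw [mul_div_cancel₀ _ (by positivity : 1 + δ ≠ 0)]
    exact hle.trans (le_add_of_nonneg_right (by positivity))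

theorem mul_neg_log_le_negMulLog_add {m p δ : ℝ} (hm : 0 ≤ m) (hδ : 0 ≤ δ)
    (hmp : m ≤ (1 + δ) * p) : m * -Real.log p ≤ Real.negMulLog m + δ * m := by
  rcases hm.eq_or_lt with rfl | hm
  · simp
  have hp : 0 < p := pos_of_mul_pos_right (hm.trans_le hmp) (by positivity)
  have hlog : Real.log m ≤ δ + Real.log p := by
    calc Real.log m ≤ Real.log ((1 + δ) * p) := Real.log_le_log hm hmp
      _ = Real.log (1 + δ) + Real.log p := Real.log_mul (by positivity) hp.ne'
      _ ≤ δ + Real.log p := by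
        gcongr
        linarith [Real.log_le_sub_one_of_pos (show 0 < 1 + δ by positivity)]
  calc m * -Real.log p ≤ m * (-Real.log m + δ) := by gcongr; linarith
    _ = Real.negMulLog m + δ * m := by rw [Real.negMulLog]; ring

theorem sum_negMulLog_le_log_card {β : Type*} [Fintype β] {m : β → ℝ} (hm : ∀ b, 0 ≤ m b)
    (hsum : ∑ b, m b = 1) : ∑ b, Real.negMulLog (m b) ≤ Real.log (Fintype.card β) := by
  have : Nonempty β := by
    by_contra hβ
    have := not_nonempty_iff.1 hβ
    simp at hsum
  set N : ℝ := (Fintype.card β : ℝ)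
  have hN : 0 < N := by positivity
  have jensen : ∑ b, N⁻¹ * Real.negMulLog (m b) ≤ Real.negMulLog (∑ b, N⁻¹ * m b) :=
    Real.concaveOn_negMulLog.le_map_sum (fun _ _ => by positivity)
      (by simp [N]) fun b _ => hm b
  rw [← Finset.mul_sum, ← Finset.mul_sum, hsum, mul_one, Real.negMulLog, Real.log_inv,
    neg_mul_neg] at jensen
  exact le_of_mul_le_mul_left jensen (inv_pos.2 hN)

theorem limsup_log_div_nonneg (N : ℕ → ℕ) :
    0 ≤ limsup (fun n : ℕ => Real.log (N n) / n) atTop := by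
  rw [limsup_eq]
  refine Real.sInf_nonneg fun a ha => ?_
  obtain ⟨n, hn⟩ := (show ∀ᶠ n : ℕ in atTop, Real.log (N n) / n ≤ a from ha).exists
  exact (div_nonneg (Real.log_natCast_nonneg _) n.cast_nonneg).trans hn

theorem limsup_log_div_le {N : ℕ → ℕ} {C a : ℝ} (ha : 0 ≤ a)
    (hN : ∀ n : ℕ, 0 < n → (N n : ℝ) ≤ C * Real.exp (n * a)) :
    limsup (fun n : ℕ => Real.log (N n) / n) atTop ≤ a := by
  have hlog : ∀ n : ℕ, 0 < n → Real.log (N n) / n ≤ |Real.log C| / n + a := by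
    intro n hn
    have hn' : (0 : ℝ) < n := by exact_mod_cast hn
    rw [div_add' _ _ _ hn'.ne']
    gcongr
    rcases (N n).eq_zero_or_pos with hzero | hpos
    · rw [hzero, Nat.cast_zero, Real.log_zero]
      positivity
    have hC : 0 < C := pos_of_mul_pos_left
      (lt_of_lt_of_le (by exact_mod_cast hpos) (hN n hn)) (Real.exp_pos _).le
    calc Real.log (N n) ≤ Real.log (C * Real.exp (n * a)) :=
          Real.log_le_log (by exact_mod_cast hpos) (hN n hn)
      _ = Real.log C + n * a := by rw [Real.log_mul hC.ne' (Real.exp_ne_zero _), Real.log_exp]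
      _ ≤ |Real.log C| + a * n := by linarith [le_abs_self (Real.log C)]
  have hlim : Tendsto (fun n : ℕ => |Real.log C| / n + a) atTop (𝓝 a) := by
    simpa using (tendsto_const_div_atTop_nhds_zero_nat |Real.log C|).add_const a
  calc limsup (fun n : ℕ => Real.log (N n) / n) atTop
      ≤ limsup (fun n : ℕ => |Real.log C| / n + a) atTop :=
        limsup_le_limsup ((eventually_gt_atTop 0).mono hlog)
          (isCoboundedUnder_le_of_le atTop fun n =>
            div_nonneg (Real.log_natCast_nonneg _) n.cast_nonneg)
          hlim.isBoundedUnder_le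
    _ = a := hlim.limsup_eq

end Entropy

section Partition

open scoped Function

variable {X ι : Type*} {f : X → X} {T : ι → Set X} {n : ℕ}

/-- The cylinder `⋂_{j<n} f^{-j} T_{b_j}` of a word `b` over the index set of the family `T`; for a
partition `T` these are the atoms of `⋁_{j<n} f^{-j} T`. -/
def dynCylinder (f : X → X) (T : ι → Set X) {n : ℕ} (b : Fin n → ι) : Set X :=
  ⋂ j : Fin n, f^[j] ⁻¹' T (b j)

theorem dynCylinder_mono {S : ι → Set X} (hST : ∀ i, S i ⊆ T i) (b : Fin n → ι) :
    dynCylinder f S b ⊆ dynCylinder f T b :=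
  iInter_mono fun _ => preimage_mono (hST _)

theorem dynCylinder_succ (b : Fin (n + 1) → ι) :
    dynCylinder f T b = T (b 0) ∩ f ⁻¹' dynCylinder f T (Fin.tail b) := by
  ext x
  simp [dynCylinder, Fin.forall_fin_succ, Fin.tail]

theorem mem_dynJoin {P : Finset (Set X)} {D : Set X} :
    D ∈ dynJoin f P n ↔ ∃ b : Fin n → P, dynCylinder f (fun A : P => (A : Set X)) b = D := by
  classical
  induction n generalizing D with
  | zero => simp [dynJoin, dynCylinder, eq_comm]
  | succ n ih =>
    simp only [dynJoin, joinParts, Finset.mem_image, Finset.mem_product, Prod.exists, ih,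
      dynCylinder_succ]
    constructor
    · rintro ⟨A, _, ⟨hA, _, ⟨b, rfl⟩, rfl⟩, rfl⟩
      exact ⟨Fin.cons ⟨A, hA⟩ b, by simp⟩
    · rintro ⟨b, rfl⟩
      exact ⟨_, _, ⟨(b 0).2, _, ⟨Fin.tail b, rfl⟩, rfl⟩, rfl⟩

variable [MeasurableSpace X] {μ : Measure X}

/-- An indexed version of `IsPartition`: a family of measurable sets that covers the space and is
pairwise disjoint, both up to `μ`-null sets. Unlike in a `Finset (Set X)`, a null set may occur
several times. -/
structure IsAEPartition (μ : Measure X) (T : ι → Set X) : Prop where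
  measurableSet : ∀ i, MeasurableSet (T i)
  aedisjoint : Pairwise (AEDisjoint μ on T)
  measure_compl_iUnion : μ (⋃ i, T i)ᶜ = 0

theorem IsPartition.isAEPartition {P : Finset (Set X)} (hP : IsPartition μ P) :
    IsAEPartition μ (fun A : P => (A : Set X)) where
  measurableSet A := hP.1 A A.2
  aedisjoint A B hAB := hP.2.2 A A.2 B B.2 (Subtype.coe_ne_coe.2 hAB)
  measure_compl_iUnion := by
    rw [compl_eq_univ_sdiff, iUnion_subtype]
    exact hP.2.1

namespace IsAEPartition

theorem dynCylinder (hT : IsAEPartition μ T) (hf : MeasurePreserving f μ μ) (n : ℕ) :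
    IsAEPartition μ (fun b : Fin n → ι => dynCylinder f T b) where
  measurableSet b := MeasurableSet.iInter fun j => (hf.iterate j).measurable (hT.measurableSet _)
  aedisjoint b b' hne := by
    obtain ⟨j, hj⟩ := Function.ne_iff.1 hne
    exact ((hT.aedisjoint hj).preimage (hf.iterate j).quasiMeasurePreserving).mono
      (iInter_subset _ j) (iInter_subset _ j)
  measure_compl_iUnion := by
    have hsub : (⋃ b : Fin n → ι, MMD.dynCylinder f T b)ᶜ
        ⊆ ⋃ j : Fin n, f^[j] ⁻¹' (⋃ i, T i)ᶜ := by
      intro x hx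
      by_contra hx'
      have hcover : ∀ j : Fin n, ∃ i, f^[j] x ∈ T i := by simpa using hx'
      choose b hb using hcover
      exact hx (mem_iUnion.2 ⟨b, mem_iInter.2 hb⟩)
    exact measure_mono_null hsub <| measure_iUnion_null fun j =>
      (hf.iterate j).quasiMeasurePreserving.preimage_null hT.measure_compl_iUnion

theorem sum_measureReal [Fintype ι] [IsProbabilityMeasure μ] (hT : IsAEPartition μ T) :
    ∑ i, μ.real (T i) = 1 := by
  have hmeas : MeasurableSet (⋃ i ∈ Finset.univ, T i) :=
    Finset.measurableSet_biUnion _ fun i _ => hT.measurableSet i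
  rw [← measureReal_biUnion_finset₀ (hT.aedisjoint.set_pairwise _)
    fun i _ => (hT.measurableSet i).nullMeasurableSet, measureReal_def,
    (prob_compl_eq_zero_iff hmeas).1 (by simpa using hT.measure_compl_iUnion), ENNReal.toReal_one]

end IsAEPartition

variable {P : Finset (Set X)}

theorem partEnt_dynJoin (hP : IsPartition μ P) (hf : MeasurePreserving f μ μ) (n : ℕ) :
    partEnt μ (dynJoin f P n) = ∑ b : Fin n → P,
      Real.negMulLog (μ.real (dynCylinder f (fun A : P => (A : Set X)) b)) := by
  classical
  have himage : dynJoin f P n = Finset.univ.image fun b : Fin n → P =>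
      dynCylinder f (fun A : P => (A : Set X)) b := by
    ext D
    simp only [mem_dynJoin, Finset.mem_image, Finset.mem_univ, true_and]
  rw [himage]
  refine Finset.sum_image_of_pairwise_eq_zero fun b _ b' _ hne heq => ?_
  have hnull := (hP.isAEPartition.dynCylinder hf n).aedisjoint hne
  simp only [Function.onFun, AEDisjoint, ← heq, inter_self] at hnull
  simp only [hnull, ENNReal.toReal_zero, Real.negMulLog_zero]

theorem partEnt_dynJoin_le [IsProbabilityMeasure μ] (hP : IsPartition μ P)
    (hf : MeasurePreserving f μ μ) (n : ℕ) :
    partEnt μ (dynJoin f P n) ≤ n * Real.log P.card := by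
  rw [partEnt_dynJoin hP hf n]
  have := sum_negMulLog_le_log_card (fun _ => measureReal_nonneg)
    (hP.isAEPartition.dynCylinder hf n).sum_measureReal
  simpa using this

theorem isBoundedUnder_partEnt_dynJoin_div [IsProbabilityMeasure μ] (hP : IsPartition μ P)
    (hf : MeasurePreserving f μ μ) :
    IsBoundedUnder (· ≤ ·) atTop fun n : ℕ => partEnt μ (dynJoin f P n) / n := by
  refine isBoundedUnder_of ⟨Real.log P.card, fun n => ?_⟩
  exact div_le_of_le_mul₀ n.cast_nonneg (Real.log_natCast_nonneg _)
    ((partEnt_dynJoin_le hP hf n).trans_eq (mul_comm _ _))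

end Partition

section Coding

open scoped Function

variable {X ι κ : Type*}

theorem exists_coding_of_pairwise_disjoint {U : ι → Set X} (hU : Pairwise (Disjoint on U))
    {R : X → X → Prop} (hUR : ∀ i, ∀ x ∈ U i, ∀ y ∈ U i, R x y) {d : X → κ}
    (hdR : ∀ x y, d x = d y → R x y) :
    ∃ c : X → ι ⊕ κ, (∀ i, ∀ x ∈ U i, c x = Sum.inl i) ∧ ∀ x y, c x = c y → R x y := by
  classical
  let c : X → ι ⊕ κ := fun x => if h : ∃ i, x ∈ U i then Sum.inl h.choose else Sum.inr (d x)
  have hc : ∀ i, ∀ x ∈ U i, c x = Sum.inl i := by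
    intro i x hx
    have h : ∃ i, x ∈ U i := ⟨i, hx⟩
    simp only [c, dif_pos h]
    exact congrArg Sum.inl (hU.eq (not_disjoint_iff.2 ⟨x, h.choose_spec, hx⟩))
  have hc' : ∀ x, (∀ i, x ∉ U i) → c x = Sum.inr (d x) := fun x hx =>
    dif_neg (not_exists.2 hx)
  refine ⟨c, hc, fun x y hxy => ?_⟩
  by_cases hx : ∃ i, x ∈ U i <;> by_cases hy : ∃ j, y ∈ U j
  · obtain ⟨⟨i, hi⟩, ⟨j, hj⟩⟩ := hx, hy
    rw [hc i x hi, hc j y hj, Sum.inl.injEq] at hxy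
    exact hUR i x hi y (hxy ▸ hj)
  · obtain ⟨i, hi⟩ := hx
    rw [hc i x hi, hc' y (not_exists.1 hy)] at hxy
    exact absurd hxy Sum.inl_ne_inr
  · obtain ⟨j, hj⟩ := hy
    rw [hc' x (not_exists.1 hx), hc j y hj] at hxy
    exact absurd hxy Sum.inr_ne_inl
  · rw [hc' x (not_exists.1 hx), hc' y (not_exists.1 hy), Sum.inr.injEq] at hxy
    exact hdR x y hxy

theorem exists_pairwise_disjoint_thickening [PseudoMetricSpace X] [CompactSpace X] [Finite ι]
    {K : ι → Set X} (hK : ∀ i, IsClosed (K i)) (hdisj : Pairwise (Disjoint on K)) {ε : ℝ}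
    (hdiam : ∀ i, Metric.diam (K i) < ε) :
    ∃ r > 0, Pairwise (Disjoint on fun i => Metric.thickening r (K i)) ∧
      ∀ i, Metric.diam (Metric.thickening r (K i)) ≤ ε := by
  have eventually_disjoint : ∀ i j, i ≠ j → ∀ᶠ r in 𝓝[>] (0 : ℝ),
      Disjoint (Metric.thickening r (K i)) (Metric.thickening r (K j)) := by
    intro i j hij
    obtain ⟨s, hs, h⟩ := (hdisj hij).exists_thickenings (hK i).isCompact (hK j)
    filter_upwards [Ioo_mem_nhdsGT hs] with r hr
    exact h.mono (Metric.thickening_mono hr.2.le _) (Metric.thickening_mono hr.2.le _)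
  have eventually_diam_le : ∀ i, ∀ᶠ r in 𝓝[>] (0 : ℝ),
      Metric.diam (Metric.thickening r (K i)) ≤ ε := by
    intro i
    filter_upwards [Ioo_mem_nhdsGT (half_pos (sub_pos.2 (hdiam i)))] with r hr
    linarith [Metric.diam_thickening_le (K i) hr.1.le, hr.2]
  have key : ∀ᶠ r in 𝓝[>] (0 : ℝ), 0 < r ∧
      (∀ i j, i ≠ j → Disjoint (Metric.thickening r (K i)) (Metric.thickening r (K j))) ∧
      ∀ i, Metric.diam (Metric.thickening r (K i)) ≤ ε := by
    refine (eventually_mem_nhdsWithin (s := Ioi 0)).and (Eventually.and ?_ ?_) <;>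
      simpa only [eventually_all]
  obtain ⟨r, hr, hr_disj, hr_diam⟩ := key.exists
  exact ⟨r, hr, fun i j => hr_disj i j, hr_diam⟩

variable [MeasurableSpace X] {μ : Measure X}

theorem exists_simpleFunc_dist_lt [PseudoMetricSpace X] [CompactSpace X] [Nonempty X]
    [OpensMeasurableSpace X] {ε : ℝ} (hε : 0 < ε) :
    ∃ c : SimpleFunc X X, ∀ x, dist (c x) x < ε := by
  obtain ⟨s, hs⟩ := isCompact_univ.elim_finite_subcover
    (fun k => Metric.ball (TopologicalSpace.denseSeq X k) ε) (fun _ => Metric.isOpen_ball)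
    fun x _ => by
      obtain ⟨k, hk⟩ := (TopologicalSpace.denseRange_denseSeq X).exists_dist_lt x hε
      exact mem_iUnion.2 ⟨k, hk⟩
  refine ⟨SimpleFunc.nearestPt (TopologicalSpace.denseSeq X) (s.sup id), fun x => ?_⟩
  obtain ⟨k, hks, hk⟩ := mem_iUnion₂.1 (hs (mem_univ x))
  have hle := SimpleFunc.edist_nearestPt_le (TopologicalSpace.denseSeq X) x
    (Finset.le_sup (f := id) hks)
  rw [id, edist_dist, edist_dist, ENNReal.ofReal_le_ofReal_iff dist_nonneg] at hle
  exact hle.trans_lt (by rwa [dist_comm])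

theorem exists_isPartition_partDiamLt [PseudoMetricSpace X] [CompactSpace X] [Nonempty X]
    [OpensMeasurableSpace X] (μ : Measure X) {ε : ℝ} (hε : 0 < ε) :
    ∃ P : Finset (Set X), IsPartition μ P ∧ partDiamLt P ε := by
  classical
  obtain ⟨c, hc⟩ := exists_simpleFunc_dist_lt (X := X) (show 0 < ε / 3 by positivity)
  refine ⟨c.range.image fun y => c ⁻¹' {y}, ⟨?_, ?_, ?_⟩, ?_⟩
  · simp only [Finset.forall_mem_image]
    exact fun y _ => c.measurableSet_fiber y
  · have hcover : ⋃ A ∈ c.range.image fun y => c ⁻¹' {y}, A = univ :=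
      eq_univ_of_forall fun x =>
        mem_iUnion₂.2 ⟨_, Finset.mem_image_of_mem _ (c.mem_range_self x), rfl⟩
    rw [hcover, sdiff_self, measure_empty]
  · simp only [Finset.forall_mem_image]
    intro y _ z _ hne
    have hyz : y ≠ z := fun h => hne (by rw [h])
    rw [← preimage_inter, singleton_inter_eq_empty.2 (mem_singleton_iff.not.2 hyz),
      preimage_empty, measure_empty]
  · simp only [partDiamLt, Finset.forall_mem_image]
    intro y _
    refine (Metric.diam_le_of_forall_dist_le (C := ε / 3 + ε / 3) (by positivity)
      fun x hx z hz => ?_).trans_lt (by linarith)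
    calc dist x z ≤ dist y x + dist y z := dist_triangle_left x z y
      _ ≤ ε / 3 + ε / 3 := add_le_add (hx ▸ hc x).le (hz ▸ hc z).le

theorem exists_isClosed_subset_measureReal_sdiff_le [TopologicalSpace X]
    [OpensMeasurableSpace X] [IsFiniteMeasure μ] [μ.WeaklyRegular]
    [Countable ι] {T : ι → Set X} (hT : ∀ i, MeasurableSet (T i))
    (hdisj : Pairwise (AEDisjoint μ on T)) {γ : ℝ} (hγ : 0 < γ) :
    ∃ K : ι → Set X, (∀ i, IsClosed (K i)) ∧ (∀ i, K i ⊆ T i) ∧ Pairwise (Disjoint on K) ∧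
      ∀ i, μ.real (T i \ K i) ≤ γ := by
  obtain ⟨t, ht_meas, ht_null, ht_disj⟩ := exists_null_pairwise_disjoint_sdiff hdisj
  have hclosed : ∀ i, ∃ K ⊆ T i \ t i, IsClosed K ∧ μ ((T i \ t i) \ K) < ENNReal.ofReal γ :=
    fun i => ((hT i).diff (ht_meas i)).exists_isClosed_sdiff_lt (measure_ne_top _ _)
      (ENNReal.ofReal_pos.2 hγ).ne'
  choose K hKT hK hKγ using hclosed
  refine ⟨K, hK, fun i => (hKT i).trans sdiff_subset, fun i j hij =>
    (ht_disj hij).mono (hKT i) (hKT j), fun i => ENNReal.toReal_le_of_le_ofReal hγ.le ?_⟩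
  calc μ (T i \ K i) ≤ μ ((T i \ t i) \ K i ∪ t i) :=
        measure_mono fun x hx => by by_cases h : x ∈ t i <;> simp [hx.1, hx.2, h]
    _ ≤ μ ((T i \ t i) \ K i) + μ (t i) := measure_union_le _ _
    _ ≤ ENNReal.ofReal γ := by rw [ht_null i, add_zero]; exact (hKγ i).le

variable {f : X → X} {n : ℕ}

theorem measureReal_dynCylinder_sdiff_le [IsFiniteMeasure μ] (hf : MeasurePreserving f μ μ)
    {T K : ι → Set X} (hT : ∀ i, MeasurableSet (T i)) (hK : ∀ i, MeasurableSet (K i)) {γ : ℝ}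
    (hγ : ∀ i, μ.real (T i \ K i) ≤ γ) (b : Fin n → ι) :
    μ.real (dynCylinder f T b \ dynCylinder f K b) ≤ n * γ := by
  have hsub : dynCylinder f T b \ dynCylinder f K b
      ⊆ ⋃ j : Fin n, f^[j] ⁻¹' (T (b j) \ K (b j)) := by
    rintro x ⟨hxT, hxK⟩
    simp only [dynCylinder, mem_iInter, not_forall] at hxT hxK
    obtain ⟨j, hj⟩ := hxK
    exact mem_iUnion.2 ⟨j, hxT j, hj⟩
  calc μ.real (dynCylinder f T b \ dynCylinder f K b)
      ≤ ∑ j : Fin n, μ.real (f^[j] ⁻¹' (T (b j) \ K (b j))) :=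
        (measureReal_mono hsub).trans (measureReal_iUnion_fintype_le _)
    _ = ∑ j : Fin n, μ.real (T (b j) \ K (b j)) := Finset.sum_congr rfl fun j _ =>
        (hf.iterate j).measureReal_preimage ((hT _).diff (hK _)).nullMeasurableSet
    _ ≤ ∑ _j : Fin n, γ := Finset.sum_le_sum fun j _ => hγ _
    _ = n * γ := by simp

theorem measureReal_le_integral_of_le_on [TopologicalSpace X] [CompactSpace X]
    [OpensMeasurableSpace X] [IsFiniteMeasure μ] {K : Set X} (hK : MeasurableSet K) (g : C(X, ℝ))
    (hg : ∀ x, 0 ≤ g x) (hg1 : ∀ x ∈ K, 1 ≤ g x) : μ.real K ≤ ∫ x, g x ∂μ := by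
  rw [← integral_indicator_one hK]
  refine integral_mono ((integrable_const _).indicator hK)
    (g.continuous.integrable_of_hasCompactSupport (.of_compactSpace _)) ?_
  exact indicator_le' hg1 fun x _ => hg x

theorem exists_continuousMap_ge_integral_le [TopologicalSpace X] [CompactSpace X] [NormalSpace X]
    [OpensMeasurableSpace X] [IsProbabilityMeasure μ] {β : Type*} [Fintype β] {K U : β → Set X}
    (hK : ∀ b, IsClosed (K b)) (hU : ∀ b, IsOpen (U b)) (hKU : ∀ b, K b ⊆ U b)
    (hdisj : Pairwise (Disjoint on U)) {Φ : X → ℝ} {M : ℝ} (hΦM : ∀ x, Φ x ≤ M) {v : β → ℝ}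
    (hΦv : ∀ b, ∀ x ∈ U b, Φ x ≤ v b) (hvM : ∀ b, v b ≤ M) :
    ∃ ψ : C(X, ℝ), (∀ x, Φ x ≤ ψ x) ∧
      ∫ x, ψ x ∂μ ≤ M + ∑ b, (v b - M) * μ.real (K b) := by
  have urysohn : ∀ b, ∃ g : C(X, ℝ), EqOn g 0 (U b)ᶜ ∧ EqOn g 1 (K b) ∧ ∀ x, g x ∈ Icc (0 : ℝ) 1 :=
    fun b => exists_continuous_zero_one_of_isClosed (hU b).isClosed_compl (hK b)
      (disjoint_compl_left_iff_subset.2 (hKU b))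
  choose g hg0 hg1 hg01 using urysohn
  have integrable_g : ∀ b, Integrable (g b) μ := fun b =>
    (g b).continuous.integrable_of_hasCompactSupport (.of_compactSpace _)
  refine ⟨ContinuousMap.const X M + ∑ b, (v b - M) • g b, fun x => ?_, ?_⟩ <;>
    simp only [ContinuousMap.add_apply, ContinuousMap.const_apply, ContinuousMap.coe_sum,
      Finset.sum_apply, ContinuousMap.smul_apply, smul_eq_mul]
  · by_cases hx : ∃ b, x ∈ U b
    · obtain ⟨b, hb⟩ := hx
      rw [Finset.sum_eq_single_of_mem b (Finset.mem_univ b) fun b' _ hne => by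
        simp [hg0 b' (disjoint_left.1 (hdisj hne.symm) hb)]]
      nlinarith [hΦv b x hb, hvM b, (hg01 b x).2]
    · rw [Finset.sum_eq_zero fun b _ => by simp [hg0 b (not_exists.1 hx b)], add_zero]
      exact hΦM x
  · rw [integral_add (integrable_const _)
      (integrable_finsetSum _ fun b _ => (integrable_g b).const_mul _),
      integral_finsetSum _ fun b _ => (integrable_g b).const_mul _]
    simp only [integral_const, probReal_univ, one_smul, integral_const_mul]
    refine add_le_add_right (Finset.sum_le_sum fun b _ => ?_) M
    refine mul_le_mul_of_nonpos_left ?_ (sub_nonpos.2 (hvM b))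
    exact measureReal_le_integral_of_le_on (hK b).measurableSet (g b) (fun x => (hg01 b x).1)
      fun x hx => (hg1 b hx).ge

end Coding

section Potential

open scoped Function

variable {X ι κ : Type*} {f : X → X} {n : ℕ}

theorem pairwise_disjoint_dynCylinder {U : ι → Set X} (hU : Pairwise (Disjoint on U)) :
    Pairwise (Disjoint on fun b : Fin n → ι => dynCylinder f U b) := by
  intro b b' hne
  obtain ⟨j, hj⟩ := Function.ne_iff.1 hne
  exact ((hU hj).preimage f^[j]).mono (iInter_subset _ j) (iInter_subset _ j)

theorem itinerary_eq_of_mem_dynCylinder {A : Type*} {U : ι → Set X} {c : X → A} {a : ι → A}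
    (hc : ∀ i, ∀ x ∈ U i, c x = a i) (b : Fin n → ι) {x : X} (hx : x ∈ dynCylinder f U b) :
    itinerary f c n x = a ∘ b :=
  funext fun j => hc (b j) _ (mem_iInter.1 hx j)

/-- `(n, ε)`-separated sets: distinct points are more than `ε` apart in the Bowen metric `d_n`. -/
def IsBowenSeparated [PseudoMetricSpace X] (f : X → X) (n : ℕ) (ε : ℝ) (E : Set X) : Prop :=
  E.Pairwise fun x y => ∃ i < n, ε < dist (f^[i] x) (f^[i] y)

theorem IsBowenSeparated.injOn_itinerary [PseudoMetricSpace X] {A : Type*} {c : X → A} {ε : ℝ}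
    {E : Set X} (hE : IsBowenSeparated f n ε E) (hc : ∀ x y, c x = c y → dist x y ≤ ε) :
    InjOn (itinerary f c n) E := by
  intro x hx y hy hxy
  by_contra hne
  obtain ⟨i, hi, hlt⟩ := hE hx hy hne
  exact hlt.not_ge (hc _ _ (congrFun hxy ⟨i, hi⟩))

theorem add_sum_sub_mul_le {β : Type*} [Fintype β] {m k v : β → ℝ} (hm : ∑ b, m b = 1) {M γ : ℝ}
    (hvM : ∀ b, v b ≤ M) (hk : ∀ b, m b - k b ≤ γ) :
    M + ∑ b, (v b - M) * k b ≤ ∑ b, v b * m b + (∑ b, (M - v b)) * γ := by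
  calc M + ∑ b, (v b - M) * k b = ∑ b, v b * m b + ∑ b, (M - v b) * (m b - k b) := by
        have hM : M = ∑ b, M * m b := by rw [← Finset.mul_sum, hm, mul_one]
        nth_rewrite 1 [hM]
        simp only [← Finset.sum_add_distrib]
        exact Finset.sum_congr rfl fun b _ => by ring
    _ ≤ ∑ b, v b * m b + (∑ b, (M - v b)) * γ := by
        rw [Finset.sum_mul]
        gcongr with b
        · exact sub_nonneg.2 (hvM b)
        · exact hk b

variable [PseudoMetricSpace X] [CompactSpace X] [MeasurableSpace X] [BorelSpace X]
  {μ : Measure X} [IsProbabilityMeasure μ] [Fintype ι] {T : ι → Set X} {ε δ : ℝ}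

theorem exists_coding_continuousMap_ge [Finite κ] (hf : Continuous f)
    (hμ : MeasurePreserving f μ μ) (hT : IsAEPartition μ T)
    (hdiam : ∀ i, Metric.diam (T i) < ε) {d : X → κ} (hd : ∀ x y, d x = d y → dist x y ≤ ε)
    (φ : (Fin n → ι ⊕ κ) → ℝ) (hδ : 0 < δ) :
    ∃ (c : X → ι ⊕ κ) (ψ : C(X, ℝ)), (∀ x y, c x = c y → dist x y ≤ ε) ∧
      (∀ x, φ (itinerary f c n x) ≤ ψ x) ∧
      ∫ x, ψ x ∂μ ≤ ∑ b : Fin n → ι, φ (Sum.inl ∘ b) * μ.real (dynCylinder f T b) + δ := by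
  obtain ⟨M, hM⟩ := (finite_range φ).bddAbove
  rw [mem_upperBounds, forall_mem_range] at hM
  obtain ⟨γ, hγ, hγδ⟩ := exists_pos_mul_lt hδ ((∑ b : Fin n → ι, (M - φ (Sum.inl ∘ b))) * n)
  obtain ⟨K, hK, hKT, hKdisj, hKγ⟩ :=
    exists_isClosed_subset_measureReal_sdiff_le hT.measurableSet hT.aedisjoint hγ
  obtain ⟨r, hr, hUdisj, hUdiam⟩ := exists_pairwise_disjoint_thickening hK hKdisj fun i =>
    (Metric.diam_mono (hKT i) (Metric.isBounded_of_compactSpace)).trans_lt (hdiam i)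
  obtain ⟨c, hcU, hc⟩ := exists_coding_of_pairwise_disjoint hUdisj
    (fun i x hx y hy => (Metric.dist_le_diam_of_mem Metric.isBounded_of_compactSpace hx hy).trans
      (hUdiam i)) hd
  obtain ⟨ψ, hψ, hψ_int⟩ := exists_continuousMap_ge_integral_le (μ := μ)
    (K := fun b : Fin n → ι => dynCylinder f K b)
    (U := fun b => dynCylinder f (fun i => Metric.thickening r (K i)) b)
    (fun b => isClosed_iInter fun j => (hK (b j)).preimage (hf.iterate j))
    (fun b => isOpen_iInter_of_finite fun j =>
      Metric.isOpen_thickening.preimage (hf.iterate j))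
    (fun b => dynCylinder_mono (fun i => Metric.self_subset_thickening hr (K i)) b)
    (pairwise_disjoint_dynCylinder hUdisj) (fun x => hM (itinerary f c n x))
    (fun b x hx => (congrArg φ (itinerary_eq_of_mem_dynCylinder hcU b hx)).le)
    (fun b => hM _)
  refine ⟨c, ψ, hc, hψ, hψ_int.trans ?_⟩
  have measureReal_sub_le : ∀ b : Fin n → ι,
      μ.real (dynCylinder f T b) - μ.real (dynCylinder f K b) ≤ n * γ := fun b =>
    (le_measureReal_sdiff (measure_ne_top μ _)).trans
      (measureReal_dynCylinder_sdiff_le hμ hT.measurableSet (fun i => (hK i).measurableSet) hKγ b)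
  refine (add_sum_sub_mul_le (hT.dynCylinder hμ n).sum_measureReal (fun b => hM _)
    measureReal_sub_le).trans ?_
  rw [← mul_assoc]
  gcongr

theorem exists_continuousMap_card_separated_le (hf : Continuous f) (hμ : MeasurePreserving f μ μ)
    (hT : IsAEPartition μ T) (hε : 0 < ε) (hdiam : ∀ i, Metric.diam (T i) < ε) {q : ℕ}
    (hq : 0 < q) (hδ : 0 < δ) :
    ∃ (ψ : C(X, ℝ)) (C : ℝ),
      ∫ x, ψ x ∂μ < ∑ b : Fin q → ι, Real.negMulLog (μ.real (dynCylinder f T b)) + δ ∧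
      ∀ (n : ℕ) (L : ℝ) (E : Finset X), IsBowenSeparated f n ε E →
        (∀ x ∈ E, ∑ i ∈ Finset.range n, ψ (f^[i] x) ≤ q * L) → (E.card : ℝ) ≤ C * Real.exp L := by
  have : Nonempty X := nonempty_of_isProbabilityMeasure μ
  obtain ⟨d, hd⟩ := exists_simpleFunc_dist_lt (X := X) (half_pos hε)
  let colour : X → d.range := fun x => ⟨d x, d.mem_range_self x⟩
  have dist_le_of_colour_eq : ∀ x y, colour x = colour y → dist x y ≤ ε := by
    intro x y hxy
    have hdxy : d x = d y := congrArg Subtype.val hxy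
    linarith [dist_triangle_left x y (d x), hd x, hdxy ▸ hd y]
  have hsum := (hT.dynCylinder hμ q).sum_measureReal
  obtain ⟨p, hp, hp_sum, hp_ge⟩ := exists_pos_weights_of_map (fun _ => measureReal_nonneg) hsum
    (fun b j => (Sum.inl (b j) : ι ⊕ d.range)) (show 0 < δ / 3 by positivity)
  obtain ⟨c, ψ, hc, hψ, hψ_int⟩ := exists_coding_continuousMap_ge hf hμ hT hdiam
    dist_le_of_colour_eq (fun w => -Real.log (p w)) (show 0 < δ / 3 by positivity)
  refine ⟨ψ, _, hψ_int.trans_lt ?_, fun n L E hE hL => card_le_of_orbit_sum_le hq hp hp_sum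
    (hE.injOn_itinerary hc) fun x hx =>
      (Finset.sum_le_sum fun i _ => hψ (f^[i] x)).trans (hL x hx)⟩
  have sum_le : ∑ b : Fin q → ι, -Real.log (p (Sum.inl ∘ b)) * μ.real (dynCylinder f T b)
      ≤ ∑ b : Fin q → ι, Real.negMulLog (μ.real (dynCylinder f T b)) + δ / 3 := by
    calc _ ≤ ∑ b : Fin q → ι, (Real.negMulLog (μ.real (dynCylinder f T b))
          + δ / 3 * μ.real (dynCylinder f T b)) := Finset.sum_le_sum fun b _ =>
            (mul_comm _ _).trans_le
              (mul_neg_log_le_negMulLog_add measureReal_nonneg (by positivity) (hp_ge b))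
      _ = _ := by rw [Finset.sum_add_distrib, ← Finset.mul_sum, hsum, mul_one]
  linarith

end Potential

section SeparatedSets

variable {X : Type*} [MeasurableSpace X] {f : X → X} {ε : ℝ} {n : ℕ}

theorem integral_empProb [TopologicalSpace X] [CompactSpace X] [OpensMeasurableSpace X]
    (hn : 0 < n) (x : X) (ψ : C(X, ℝ)) :
    ∫ y, ψ y ∂(empProb f x n : Measure X)
      = (n : ℝ)⁻¹ * ∑ i ∈ Finset.range n, ψ (f^[i] x) := by
  have hdirac : ∀ i ∈ Finset.range n, Integrable ψ (Measure.dirac (f^[i] x)) := fun i _ =>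
    ψ.continuous.integrable_of_hasCompactSupport (.of_compactSpace _)
  simp only [empProb, ProbabilityMeasure.coe_mk, empMeasure, max_eq_left (Nat.one_le_of_lt hn)]
  rw [integral_smul_measure, integral_finsetSum_measure hdirac]
  simp [integral_dirac' _ _ ψ.continuous.stronglyMeasurable]

variable [MetricSpace X] [BorelSpace X]

/-- The exponential growth rate `limsup_n (1/n) log N(F; n, ε)` of the largest `(n, ε)`-separated
sets of points whose `n`-th empirical measure lies in `F`. -/
def sepGrowth (f : X → X) (F : Set (ProbabilityMeasure X)) (ε : ℝ) : ℝ :=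
  limsup (fun n : ℕ => Real.log (NsepP f F n ε) / n) atTop

theorem NsepP_integral_lt_le [CompactSpace X] (hn : 0 < n) {ψ : C(X, ℝ)} {C a : ℝ} {q : ℕ}
    (hq : 0 < q) (hcount : ∀ (L : ℝ) (E : Finset X), IsBowenSeparated f n ε E →
      (∀ x ∈ E, ∑ i ∈ Finset.range n, ψ (f^[i] x) ≤ q * L) → (E.card : ℝ) ≤ C * Real.exp L) :
    (NsepP f {ν | ∫ x, ψ x ∂(ν : Measure X) < a} n ε : ℝ) ≤ C * Real.exp (n * (a / q)) := by
  have hn' : (0 : ℝ) < n := by exact_mod_cast hn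
  have hq' : (q : ℝ) ≠ 0 := by exact_mod_cast hq.ne'
  have hC : (0 : ℝ) ≤ C * Real.exp (n * (a / q)) := by
    simpa using hcount (n * (a / q)) ∅ (by simp [IsBowenSeparated]) (by simp)
  refine (Nat.le_floor_iff hC).1 (csSup_le' ?_)
  rintro _ ⟨E, hEF, hE, rfl⟩
  refine Nat.le_floor (hcount _ E (fun x hx y hy => hE x hx y hy) fun x hx => ?_)
  have hlt : (n : ℝ)⁻¹ * ∑ i ∈ Finset.range n, ψ (f^[i] x) < a :=
    integral_empProb hn x ψ ▸ hEF hx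
  calc ∑ i ∈ Finset.range n, ψ (f^[i] x) ≤ n * a := ((inv_mul_lt_iff₀ hn').1 hlt).le
    _ = q * (n * (a / q)) := by field_simp

variable [CompactSpace X] {μ : ProbabilityMeasure X}

theorem exists_mem_nhds_sepGrowth_le (hf : Continuous f)
    (hμ : MeasurePreserving f (μ : Measure X) μ) {P : Finset (Set X)}
    (hP : IsPartition (μ : Measure X) P) (hε : 0 < ε) (hPε : partDiamLt P ε) {q : ℕ}
    (hq : 0 < q) {δ : ℝ} (hδ : 0 < δ) :
    ∃ F ∈ 𝓝 μ, sepGrowth f F ε ≤ (partEnt μ (dynJoin f P q) + δ) / q := by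
  obtain ⟨ψ, C, hψ, hcount⟩ := exists_continuousMap_card_separated_le hf hμ hP.isAEPartition hε
    (fun A => hPε A A.2) hq hδ
  rw [← partEnt_dynJoin hP hμ] at hψ
  refine ⟨{ν | ∫ x, ψ x ∂(ν : Measure X) < partEnt μ (dynJoin f P q) + δ}, ?_,
    limsup_log_div_le ?_ fun n hn => NsepP_integral_lt_le hn hq (hcount n)⟩
  · exact (isOpen_lt (ProbabilityMeasure.continuous_integral_boundedContinuousFunction
      (BoundedContinuousFunction.mkOfCompact ψ)) continuous_const).mem_nhds hψ
  · have : 0 ≤ partEnt μ (dynJoin f P q) := Finset.sum_nonneg fun A _ =>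
      Real.negMulLog_nonneg measureReal_nonneg measureReal_le_one
    positivity

theorem sInf_sepGrowth_le_partEnt_div (hf : Continuous f)
    (hμ : MeasurePreserving f (μ : Measure X) μ) {P : Finset (Set X)}
    (hP : IsPartition (μ : Measure X) P) (hε : 0 < ε) (hPε : partDiamLt P ε) {q : ℕ} (hq : 0 < q) :
    sInf ((fun F => sepGrowth f F ε) '' {F | F ∈ 𝓝 μ}) ≤ partEnt μ (dynJoin f P q) / q := by
  have hbdd : BddBelow ((fun F => sepGrowth f F ε) '' {F | F ∈ 𝓝 μ}) :=
    ⟨0, forall_mem_image.2 fun F _ => limsup_log_div_nonneg _⟩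
  have hq' : (0 : ℝ) < q := by exact_mod_cast hq
  refine le_of_forall_pos_le_add fun δ hδ => ?_
  obtain ⟨F, hF, hle⟩ := exists_mem_nhds_sepGrowth_le hf hμ hP hε hPε hq (mul_pos hδ hq')
  calc _ ≤ sepGrowth f F ε := csInf_le hbdd (mem_image_of_mem _ hF)
    _ ≤ (partEnt μ (dynJoin f P q) + δ * q) / q := hle
    _ = partEnt μ (dynJoin f P q) / q + δ := by field_simp

end SeparatedSets

end MMD

theorem stmt11 {X : Type*} [MetricSpace X] [CompactSpace X] [Nonempty X]
    [MeasurableSpace X] [BorelSpace X]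
    (f : X → X) (hf : Continuous f) (μ : ProbabilityMeasure X) (hμ : InvariantProb f μ)
    (ε : ℝ) (hε : 0 < ε) :
    sInf ((fun F => limsup (fun n : ℕ => Real.log (NsepP f F n ε) / n) atTop) ''
        {F : Set (ProbabilityMeasure X) | F ∈ 𝓝 μ}) ≤
      infEnt (μ : Measure X) f ε := by
  have hpres : MeasurePreserving f (μ : Measure X) μ := ⟨hf.measurable, hμ⟩
  obtain ⟨P₀, hP₀⟩ := exists_isPartition_partDiamLt (μ : Measure X) hε
  refine le_csInf ⟨_, P₀, hP₀, rfl⟩ ?_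
  rintro _ ⟨P, ⟨hP, hPε⟩, rfl⟩
  refine le_limsup_of_frequently_le (Eventually.frequently ?_)
    (isBoundedUnder_partEnt_dynJoin_div hP hpres)
  filter_upwards [eventually_gt_atTop 0] with q hq
  exact sInf_sepGrowth_le_partEnt_div hf hpres hP hε hPε hq

end
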